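/- arXiv:1906.05479 — 6 statements merged into one kernel-verified Lean document; each statement's English description precedes it below -/
import Mathlib

section
/- The set D_f is a *-subalgebra of 𝒜: for A, B ∈ D_f one has A* ∈ D_f with ‖A*‖_f = ‖A‖_f, and AB ∈ D_f with ‖AB − E_N(AB)‖ ≤ 3‖A‖_f‖B‖_f·f(N) for every N ∈ ℕ. Moreover, D_f equipped with the norm ‖·‖_f is complete, i.e. a Banach space. -/
open Filter

variable {𝒜 : Type*}

/-- The quasi-locality norm `‖A‖_f = ‖A‖ + sup_{N ≥ 1} ‖A - E_N(A)‖ / f(N)`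
(as a real number; the supremum is the real `sSup` of the corresponding set). -/
noncomputable def fnorm [NormedRing 𝒜] [NormedAlgebra ℂ 𝒜]
    (E : ℕ → 𝒜 →ₗ[ℂ] 𝒜) (f : ℝ → ℝ) (A : 𝒜) : ℝ :=
  ‖A‖ + sSup {r : ℝ | ∃ N : ℕ, 1 ≤ N ∧ r = ‖A - E N A‖ / f N}

/-- `A ∈ D_f` iff `‖A‖_f < ∞`, i.e. the family `‖A - E_N(A)‖ / f(N)` is bounded above. -/
def memDf [NormedRing 𝒜] [NormedAlgebra ℂ 𝒜]
    (E : ℕ → 𝒜 →ₗ[ℂ] 𝒜) (f : ℝ → ℝ) (A : 𝒜) : Prop :=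
  BddAbove {r : ℝ | ∃ N : ℕ, 1 ≤ N ∧ r = ‖A - E N A‖ / f N}

theorem memDf_iff_aux [NormedRing 𝒜] [NormedAlgebra ℂ 𝒜]
    (E : ℕ → 𝒜 →ₗ[ℂ] 𝒜) (f : ℝ → ℝ) (hf_pos : ∀ t : ℝ, 0 < t → 0 < f t) (A : 𝒜) :
    memDf E f A ↔ ∃ C : ℝ, ∀ N : ℕ, 1 ≤ N → ‖A - E N A‖ ≤ C * f N := by
  have hp : ∀ N : ℕ, 1 ≤ N → 0 < f N := fun N hN => hf_pos _ (by exact_mod_cast hN)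
  constructor
  · rintro ⟨C, hC⟩
    exact ⟨C, fun N hN => (div_le_iff₀ (hp N hN)).1 (hC ⟨N, hN, rfl⟩)⟩
  · rintro ⟨C, hC⟩
    refine ⟨C, ?_⟩
    rintro r ⟨N, hN, rfl⟩
    exact (div_le_iff₀ (hp N hN)).2 (hC N hN)

theorem sSup_nonneg_aux [NormedRing 𝒜] [NormedAlgebra ℂ 𝒜]
    (E : ℕ → 𝒜 →ₗ[ℂ] 𝒜) (f : ℝ → ℝ) (hf_pos : ∀ t : ℝ, 0 < t → 0 < f t) (A : 𝒜) :
    0 ≤ sSup {r : ℝ | ∃ N : ℕ, 1 ≤ N ∧ r = ‖A - E N A‖ / f N} := by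
  apply Real.sSup_nonneg
  rintro r ⟨N, hN, rfl⟩
  exact div_nonneg (norm_nonneg _) (hf_pos _ (by exact_mod_cast hN)).le

theorem norm_le_fnorm_aux [NormedRing 𝒜] [NormedAlgebra ℂ 𝒜]
    (E : ℕ → 𝒜 →ₗ[ℂ] 𝒜) (f : ℝ → ℝ) (hf_pos : ∀ t : ℝ, 0 < t → 0 < f t) (A : 𝒜) :
    ‖A‖ ≤ fnorm E f A := by
  have := sSup_nonneg_aux E f hf_pos A
  unfold fnorm
  linarith

theorem sub_le_fnorm_aux [NormedRing 𝒜] [NormedAlgebra ℂ 𝒜]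
    (E : ℕ → 𝒜 →ₗ[ℂ] 𝒜) (f : ℝ → ℝ) (hf_pos : ∀ t : ℝ, 0 < t → 0 < f t) (A : 𝒜)
    (hA : memDf E f A) (N : ℕ) (hN : 1 ≤ N) : ‖A - E N A‖ ≤ fnorm E f A * f N := by
  rw [← div_le_iff₀ (hf_pos _ (by exact_mod_cast hN))]
  have h : ‖A - E N A‖ / f N ≤ sSup {r : ℝ | ∃ N : ℕ, 1 ≤ N ∧ r = ‖A - E N A‖ / f N} :=
    le_csSup hA ⟨N, hN, rfl⟩
  have := norm_nonneg A
  unfold fnorm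
  linarith

theorem fnorm_le_aux [NormedRing 𝒜] [NormedAlgebra ℂ 𝒜]
    (E : ℕ → 𝒜 →ₗ[ℂ] 𝒜) (f : ℝ → ℝ) (hf_pos : ∀ t : ℝ, 0 < t → 0 < f t) (A : 𝒜) (C : ℝ)
    (hC : ∀ N : ℕ, 1 ≤ N → ‖A - E N A‖ ≤ C * f N) : fnorm E f A ≤ ‖A‖ + C := by
  unfold fnorm
  gcongr
  refine csSup_le ⟨_, 1, le_rfl, rfl⟩ ?_
  rintro r ⟨N, hN, rfl⟩
  exact (div_le_iff₀ (hf_pos _ (by exact_mod_cast hN))).2 (hC N hN)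

theorem memDf_sub_aux [NormedRing 𝒜] [NormedAlgebra ℂ 𝒜]
    (E : ℕ → 𝒜 →ₗ[ℂ] 𝒜) (f : ℝ → ℝ) (hf_pos : ∀ t : ℝ, 0 < t → 0 < f t) (A B : 𝒜)
    (hA : memDf E f A) (hB : memDf E f B) : memDf E f (A - B) := by
  rw [memDf_iff_aux E f hf_pos] at *
  obtain ⟨C, hC⟩ := hA
  obtain ⟨D, hD⟩ := hB
  refine ⟨C + D, fun N hN => ?_⟩
  have h : A - B - E N (A - B) = (A - E N A) - (B - E N B) := by
    rw [map_sub]; abel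
  rw [h, add_mul]
  exact (norm_sub_le _ _).trans (add_le_add (hC N hN) (hD N hN))

theorem stmt_8 [NormedRing 𝒜] [StarRing 𝒜] [CStarRing 𝒜] [CompleteSpace 𝒜]
    [NormedAlgebra ℂ 𝒜] [StarModule ℂ 𝒜]
    (E : ℕ → 𝒜 →ₗ[ℂ] 𝒜)
    (hE_norm : ∀ (N : ℕ) (x : 𝒜), ‖E N x‖ ≤ ‖x‖)
    (hE_star : ∀ (N : ℕ) (x : 𝒜), E N (star x) = star (E N x))
    (hE_comp : ∀ (N M : ℕ) (x : 𝒜), E N (E M x) = E (min N M) x)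
    (hE_mul₁ : ∀ (N : ℕ) (x y : 𝒜), E N (E N x * y) = E N x * E N y)
    (hE_mul₂ : ∀ (N : ℕ) (x y : 𝒜), E N (x * E N y) = E N x * E N y)
    (f : ℝ → ℝ) (hf_cont : ContinuousOn f (Set.Ioi 0))
    (hf_anti : AntitoneOn f (Set.Ioi 0)) (hf_pos : ∀ t : ℝ, 0 < t → 0 < f t)
    (hf_lim : Tendsto f atTop (nhds 0)) :
    (∀ A : 𝒜, memDf E f A → memDf E f (star A) ∧ fnorm E f (star A) = fnorm E f A) ∧
    (∀ A B : 𝒜, memDf E f A → memDf E f B → memDf E f (A * B) ∧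
      ∀ N : ℕ, 1 ≤ N →
        ‖A * B - E N (A * B)‖ ≤ 3 * fnorm E f A * fnorm E f B * f N) ∧
    (∀ a : ℕ → 𝒜, (∀ n, memDf E f (a n)) →
      (∀ ε : ℝ, 0 < ε → ∃ K : ℕ, ∀ m n : ℕ, K ≤ m → K ≤ n →
        fnorm E f (a m - a n) ≤ ε) →
      ∃ A : 𝒜, memDf E f A ∧
        Tendsto (fun n => fnorm E f (a n - A)) atTop (nhds 0)) := by
  have hp : ∀ N : ℕ, 1 ≤ N → 0 < f N := fun N hN => hf_pos _ (by exact_mod_cast hN)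
  refine ⟨?_, ?_, ?_⟩
  · intro A hA
    have h : ∀ N, ‖star A - E N (star A)‖ = ‖A - E N A‖ := by
      intro N
      rw [hE_star, ← star_sub, norm_star]
    refine ⟨?_, ?_⟩
    · unfold memDf at *
      simpa only [h] using hA
    · unfold fnorm
      simp only [h, norm_star]
  · intro A B hA hB
    have key : ∀ N : ℕ, 1 ≤ N →
        ‖A * B - E N (A * B)‖ ≤ 3 * fnorm E f A * fnorm E f B * f N := by
      intro N hN
      have h : A * B - E N (A * B) =
          (A - E N A) * B + E N A * (B - E N B) - E N ((A - E N A) * B) := by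
        rw [sub_mul, map_sub, hE_mul₁, mul_sub]; abel
      have a1 := norm_le_fnorm_aux E f hf_pos A
      have b1 := norm_le_fnorm_aux E f hf_pos B
      have a2 := sub_le_fnorm_aux E f hf_pos A hA N hN
      have b2 := sub_le_fnorm_aux E f hf_pos B hB N hN
      have hfN := hp N hN
      have fa : 0 ≤ fnorm E f A := (norm_nonneg _).trans a1
      have t1 : ‖(A - E N A) * B‖ ≤ fnorm E f A * f N * fnorm E f B :=
        (norm_mul_le _ _).trans (mul_le_mul a2 b1 (norm_nonneg _) (by positivity))
      have t2 : ‖E N A * (B - E N B)‖ ≤ fnorm E f A * (fnorm E f B * f N) :=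
        (norm_mul_le _ _).trans
          (mul_le_mul ((hE_norm N A).trans a1) b2 (norm_nonneg _) fa)
      have t3 := (hE_norm N ((A - E N A) * B)).trans t1
      rw [h]
      have t4 := norm_sub_le ((A - E N A) * B + E N A * (B - E N B)) (E N ((A - E N A) * B))
      have t5 := norm_add_le ((A - E N A) * B) (E N A * (B - E N B))
      linarith
    exact ⟨(memDf_iff_aux E f hf_pos _).2 ⟨_, key⟩, key⟩
  · intro a ha hc
    have hcs : CauchySeq a := by
      rw [Metric.cauchySeq_iff]
      intro ε hε
      obtain ⟨K, hK⟩ := hc (ε / 2) (half_pos hε)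
      refine ⟨K, fun m hm n hn => ?_⟩
      rw [dist_eq_norm]
      have := norm_le_fnorm_aux E f hf_pos (a m - a n)
      have := hK m n hm hn
      linarith
    obtain ⟨A, hA⟩ := cauchySeq_tendsto_of_complete hcs
    have hEc : ∀ N, Continuous (E N) := fun N =>
      (LinearMap.mkContinuous (E N) 1 (fun x => by simpa using hE_norm N x)).continuous
    have key : ∀ ε : ℝ, 0 < ε → ∃ K : ℕ, ∀ n, K ≤ n → ‖a n - A‖ ≤ ε ∧
        ∀ N : ℕ, 1 ≤ N → ‖(a n - A) - E N (a n - A)‖ ≤ ε * f N := by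
      intro ε hε
      obtain ⟨K, hK⟩ := hc ε hε
      refine ⟨K, fun n hn => ⟨?_, fun N hN => ?_⟩⟩
      · refine le_of_tendsto ((tendsto_const_nhds (x := a n)).sub hA).norm ?_
        filter_upwards [eventually_ge_atTop K] with m hm
        exact (norm_le_fnorm_aux E f hf_pos _).trans (hK n m hn hm)
      · have ht := (tendsto_const_nhds (x := a n)).sub hA
        refine le_of_tendsto (ht.sub (((hEc N).tendsto _).comp ht)).norm ?_
        filter_upwards [eventually_ge_atTop K] with m hm
        refine (sub_le_fnorm_aux E f hf_pos _
          (memDf_sub_aux E f hf_pos _ _ (ha n) (ha m)) N hN).trans ?_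
        exact mul_le_mul_of_nonneg_right (hK n m hn hm) (hp N hN).le
    refine ⟨A, ?_, ?_⟩
    · obtain ⟨K, hK⟩ := key 1 one_pos
      have h1 : memDf E f (a K - A) :=
        (memDf_iff_aux E f hf_pos _).2 ⟨1, (hK K le_rfl).2⟩
      have h2 := memDf_sub_aux E f hf_pos _ _ (ha K) h1
      rwa [sub_sub_cancel] at h2
    · rw [Metric.tendsto_atTop]
      intro ε hε
      obtain ⟨K, hK⟩ := key (ε / 3) (by positivity)
      refine ⟨K, fun n hn => ?_⟩
      have h0 := (norm_nonneg _).trans (norm_le_fnorm_aux E f hf_pos (a n - A))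
      have h1 := fnorm_le_aux E f hf_pos (a n - A) _ (hK n hn).2
      have h2 := (hK n hn).1
      rw [Real.dist_eq, sub_zero, abs_of_nonneg h0]
      linarith
end

section
/- For any A ∈ D_f, any M ∈ ℕ, and any B ∈ 𝒜 with E_M(B) = B, the product BA belongs to D_f and satisfies ‖BA‖_f ≤ (1 + max{2/f(M), 1}) · ‖B‖ · ‖A‖_f. -/
open Filter

variable {𝒜 : Type*}

theorem stmt_9 [NormedRing 𝒜] [StarRing 𝒜] [CStarRing 𝒜] [CompleteSpace 𝒜]
    [NormedAlgebra ℂ 𝒜] [StarModule ℂ 𝒜]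
    (E : ℕ → 𝒜 →ₗ[ℂ] 𝒜)
    (hE_norm : ∀ (N : ℕ) (x : 𝒜), ‖E N x‖ ≤ ‖x‖)
    (hE_star : ∀ (N : ℕ) (x : 𝒜), E N (star x) = star (E N x))
    (hE_comp : ∀ (N M : ℕ) (x : 𝒜), E N (E M x) = E (min N M) x)
    (hE_mul₁ : ∀ (N : ℕ) (x y : 𝒜), E N (E N x * y) = E N x * E N y)
    (hE_mul₂ : ∀ (N : ℕ) (x y : 𝒜), E N (x * E N y) = E N x * E N y)
    (f : ℝ → ℝ) (hf_cont : ContinuousOn f (Set.Ioi 0))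
    (hf_anti : AntitoneOn f (Set.Ioi 0)) (hf_pos : ∀ t : ℝ, 0 < t → 0 < f t)
    (hf_lim : Tendsto f atTop (nhds 0))
    (A B : 𝒜) (hA : memDf E f A) (M : ℕ) (hM : 1 ≤ M) (hB : E M B = B) :
    memDf E f (B * A) ∧
    fnorm E f (B * A) ≤ (1 + max (2 / f M) 1) * ‖B‖ * fnorm E f A := by
  have hS : ∀ N : ℕ, 1 ≤ N → ‖A - E N A‖ / f N ≤
      sSup {r : ℝ | ∃ N : ℕ, 1 ≤ N ∧ r = ‖A - E N A‖ / f N} :=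
    fun N hN => le_csSup hA ⟨N, hN, rfl⟩
  have hpos : ∀ N : ℕ, 1 ≤ N → 0 < f N := fun N hN => hf_pos _ (by exact_mod_cast hN)
  have hS0 : 0 ≤ sSup {r : ℝ | ∃ N : ℕ, 1 ≤ N ∧ r = ‖A - E N A‖ / f N} :=
    le_trans (div_nonneg (norm_nonneg _) (hpos 1 le_rfl).le) (hS 1 le_rfl)
  have key : ∀ N : ℕ, 1 ≤ N →
      ‖B * A - E N (B * A)‖ / f N ≤ max (2 / f M) 1 * ‖B‖ * fnorm E f A := by
    intro N hN
    unfold fnorm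
    generalize sSup {r : ℝ | ∃ N : ℕ, 1 ≤ N ∧ r = ‖A - E N A‖ / f N} = S at hS hS0
    have hfN := hpos N hN
    have hfM := hpos M hM
    have hm1 : 1 ≤ max (2 / f M) 1 := le_max_right _ _
    have hm2 : 2 / f M ≤ max (2 / f M) 1 := le_max_left _ _
    have hA0 := norm_nonneg A
    have hB0 := norm_nonneg B
    rcases le_total M N with h | h
    · have hBN : E N B = B := by
        have h1 := hE_comp N M B
        rw [min_eq_right h, hB] at h1
        exact h1
      have h2 := hE_mul₁ N B A
      rw [hBN] at h2
      rw [h2, ← mul_sub]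
      calc ‖B * (A - E N A)‖ / f N ≤ (‖B‖ * ‖A - E N A‖) / f N := by
            gcongr; exact norm_mul_le _ _
        _ = 1 * ‖B‖ * (‖A - E N A‖ / f N) := by ring
        _ ≤ max (2 / f M) 1 * ‖B‖ * (‖A‖ + S) := by
            gcongr
            linarith [hS N hN]
    · have hfl : f M ≤ f N := hf_anti (Set.mem_Ioi.2 (by exact_mod_cast hN))
        (Set.mem_Ioi.2 (by exact_mod_cast hM)) (by exact_mod_cast h)
      have h3 : ‖B * A - E N (B * A)‖ ≤ 2 * (‖B‖ * ‖A‖) := by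
        linarith [norm_sub_le (B * A) (E N (B * A)), hE_norm N (B * A), norm_mul_le B A]
      calc ‖B * A - E N (B * A)‖ / f N ≤ 2 * (‖B‖ * ‖A‖) / f M := by gcongr
        _ = 2 / f M * ‖B‖ * ‖A‖ := by ring
        _ ≤ max (2 / f M) 1 * ‖B‖ * (‖A‖ + S) := by
            gcongr
            linarith
  refine ⟨⟨max (2 / f M) 1 * ‖B‖ * fnorm E f A, ?_⟩, ?_⟩
  · rintro r ⟨N, hN, rfl⟩
    exact key N hN
  · have h4 : sSup {r : ℝ | ∃ N : ℕ, 1 ≤ N ∧ r = ‖B * A - E N (B * A)‖ / f N} ≤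
        max (2 / f M) 1 * ‖B‖ * fnorm E f A := by
      refine csSup_le ⟨_, 1, le_rfl, rfl⟩ ?_
      rintro r ⟨N, hN, rfl⟩
      exact key N hN
    have h5 : ‖B * A‖ ≤ ‖B‖ * fnorm E f A := by
      refine (norm_mul_le _ _).trans ?_
      unfold fnorm
      gcongr
      linarith
    have h6 : fnorm E f (B * A) = ‖B * A‖ +
      sSup {r : ℝ | ∃ N : ℕ, 1 ≤ N ∧ r = ‖B * A - E N (B * A)‖ / f N} := rfl
    rw [h6]
    linarith
end

section
/- Let f, f₁ : (0,∞) → (0,∞) be continuous decreasing functions with lim_{t→∞} f(t) = 0, and suppose lim_{N→∞} f(N)/f₁(N) = 0. Then for every A ∈ D_f one has lim_{M→∞} ‖A − E_M(A)‖_{f₁} = 0, where ‖x‖_{f₁} := ‖x‖ + sup_{N∈ℕ} ‖x − E_N(x)‖/f₁(N). -/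
open Filter

variable {𝒜 : Type*}

theorem stmt_10 [NormedRing 𝒜] [StarRing 𝒜] [CStarRing 𝒜] [CompleteSpace 𝒜]
    [NormedAlgebra ℂ 𝒜] [StarModule ℂ 𝒜]
    (E : ℕ → 𝒜 →ₗ[ℂ] 𝒜)
    (hE_norm : ∀ (N : ℕ) (x : 𝒜), ‖E N x‖ ≤ ‖x‖)
    (hE_star : ∀ (N : ℕ) (x : 𝒜), E N (star x) = star (E N x))
    (hE_comp : ∀ (N M : ℕ) (x : 𝒜), E N (E M x) = E (min N M) x)
    (hE_mul₁ : ∀ (N : ℕ) (x y : 𝒜), E N (E N x * y) = E N x * E N y)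
    (hE_mul₂ : ∀ (N : ℕ) (x y : 𝒜), E N (x * E N y) = E N x * E N y)
    (f f₁ : ℝ → ℝ)
    (hf_cont : ContinuousOn f (Set.Ioi 0))
    (hf_anti : AntitoneOn f (Set.Ioi 0)) (hf_pos : ∀ t : ℝ, 0 < t → 0 < f t)
    (hf_lim : Tendsto f atTop (nhds 0))
    (hf₁_cont : ContinuousOn f₁ (Set.Ioi 0))
    (hf₁_anti : AntitoneOn f₁ (Set.Ioi 0)) (hf₁_pos : ∀ t : ℝ, 0 < t → 0 < f₁ t)
    (hratio : Tendsto (fun N : ℕ => f N / f₁ N) atTop (nhds 0))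
    (A : 𝒜) (hA : memDf E f A) :
    Tendsto (fun M : ℕ => fnorm E f₁ (A - E M A)) atTop (nhds 0) := by
  obtain ⟨C, hC⟩ := hA
  have hbd : ∀ N : ℕ, 1 ≤ N → ‖A - E N A‖ ≤ (|C| + 1) * f N := by
    intro N hN
    have hp : 0 < f N := hf_pos _ (by exact_mod_cast hN)
    have h1 : ‖A - E N A‖ / f N ≤ C := hC ⟨N, hN, rfl⟩
    rw [div_le_iff₀ hp] at h1
    have h2 := le_abs_self C
    nlinarith
  have hD : 0 < |C| + 1 := by positivity
  generalize |C| + 1 = D at hbd hD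
  rw [Metric.tendsto_atTop]
  intro ε hε
  have hδ : 0 < ε / (3 * D) := by positivity
  have hDδ : D * (ε / (3 * D)) = ε / 3 := by field_simp
  have hfN : Tendsto (fun N : ℕ => f N) atTop (nhds 0) :=
    hf_lim.comp tendsto_natCast_atTop_atTop
  obtain ⟨K1, hK1⟩ := eventually_atTop.1 (hfN.eventually (gt_mem_nhds hδ))
  obtain ⟨K2, hK2⟩ := eventually_atTop.1 (hratio.eventually (gt_mem_nhds hδ))
  refine ⟨max 1 (max K1 K2), fun M hM => ?_⟩
  have hM1 : 1 ≤ M := le_trans (le_max_left _ _) hM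
  have hMK1 : K1 ≤ M := le_trans (le_trans (le_max_left _ _) (le_max_right _ _)) hM
  have hMK2 : K2 ≤ M := le_trans (le_trans (le_max_right _ _) (le_max_right _ _)) hM
  have key : ∀ N : ℕ, K2 ≤ N → 1 ≤ N → D * f N / f₁ N ≤ ε / 3 := by
    intro N hN _
    have := mul_le_mul_of_nonneg_left (hK2 N hN).le hD.le
    rw [mul_div_assoc]
    linarith
  have hnorm : ‖A - E M A‖ ≤ ε / 3 := by
    have h1 := hbd M hM1
    have h2 := mul_le_mul_of_nonneg_left (hK1 M hMK1).le hD.le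
    linarith
  have hsup : sSup {r : ℝ | ∃ N : ℕ, 1 ≤ N ∧
      r = ‖(A - E M A) - E N (A - E M A)‖ / f₁ N} ≤ ε / 3 := by
    apply Real.sSup_le _ (by positivity)
    rintro r ⟨N, hN, rfl⟩
    have hN0 : (0 : ℝ) < N := by exact_mod_cast hN
    have hM0 : (0 : ℝ) < M := by exact_mod_cast hM1
    have hpN := hf₁_pos _ hN0
    have hpM := hf₁_pos _ hM0
    rw [map_sub, hE_comp]
    rcases le_total N M with h | h
    · rw [min_eq_left h, sub_self, sub_zero]
      refine le_trans ?_ (key M hMK2 hM1)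
      have hle : f₁ M ≤ f₁ N := hf₁_anti hN0 hM0 (by exact_mod_cast h)
      exact div_le_div₀ (by have := hf_pos _ hM0; positivity) (hbd M hM1) hpM hle
    · rw [min_eq_right h]
      have he : A - E M A - (E N A - E M A) = A - E N A := by abel
      rw [he]
      refine le_trans ?_ (key N (hMK2.trans h) hN)
      exact div_le_div_of_nonneg_right (hbd N hN) hpN.le
  have hnn : 0 ≤ sSup {r : ℝ | ∃ N : ℕ, 1 ≤ N ∧
      r = ‖(A - E M A) - E N (A - E M A)‖ / f₁ N} := by
    apply Real.sSup_nonneg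
    rintro r ⟨N, hN, rfl⟩
    have := hf₁_pos N (by exact_mod_cast hN)
    positivity
  have h0 := norm_nonneg (A - E M A)
  rw [Real.dist_eq, sub_zero]
  unfold fnorm
  rw [abs_of_nonneg (by linarith)]
  linarith
end

section
/- Fix 0 < β₄ < β₂ < 1 and set f₁(t) := e^{−t^{β₂}} and g(t) := e^{−t^{β₄}} for t > 0. Then for every A ∈ L_φ ∩ D_{f₁} there exists a sequence (u_N)_{N∈ℕ} in 𝒜 such that for every N: u_N lies in the range of E_N and 0 ≤ u_N ≤ 1; and as N → ∞: ‖A(1 − u_N)‖_g → 0, φ(u_N) → 0, and inf_{x ∈ L_φ} ‖x − u_N‖ → 0. -/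
open Filter

variable {𝒜 : Type*}

lemma aux_res [CStarAlgebra 𝒜] [PartialOrder 𝒜] [StarOrderedRing 𝒜] (h : 𝒜) (hh : 0 ≤ h)
    (ε : ℝ) (hε : 0 < ε) : ∃ D : 𝒜, ((ε : ℂ) • (1 : 𝒜) + h) * D = 1 ∧
      D * ((ε : ℂ) • (1 : 𝒜) + h) = 1 ∧ star D = D ∧ ‖D‖ ≤ ε⁻¹ ∧
      ‖D * h * D‖ ≤ ε⁻¹ ∧ 0 ≤ h * D ∧ h * D ≤ 1 := by
  have hsa : IsSelfAdjoint h := IsSelfAdjoint.of_nonneg hh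
  have hsp : ∀ t ∈ spectrum ℝ h, 0 ≤ t := fun t ht => spectrum_nonneg_of_nonneg hh ht
  have hc : ContinuousOn (fun t : ℝ => (ε + t)⁻¹) (spectrum ℝ h) := by
    apply ContinuousOn.inv₀ (by fun_prop)
    intro t ht
    have := hsp t ht
    positivity
  have hid : cfc (fun t : ℝ => t) h = h := cfc_id' ℝ h
  have hk : (ε : ℂ) • (1 : 𝒜) + h = cfc (fun t : ℝ => ε + t) h := by
    rw [cfc_add (R := ℝ) (a := h) (fun _ => ε) (fun t => t) (by fun_prop) (by fun_prop),
      hid, cfc_const ε h]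
    congr 1
    rw [Algebra.algebraMap_eq_smul_one, Complex.coe_smul]
  have hD : h * cfc (fun t : ℝ => (ε + t)⁻¹) h = cfc (fun t : ℝ => t * (ε + t)⁻¹) h := by
    rw [cfc_mul (fun t : ℝ => t) (fun t : ℝ => (ε + t)⁻¹) h (by fun_prop) hc, hid]
  refine ⟨cfc (fun t : ℝ => (ε + t)⁻¹) h, ?_, ?_, ?_, ?_, ?_, ?_, ?_⟩
  · rw [hk, ← cfc_mul (fun t : ℝ => ε + t) (fun t : ℝ => (ε + t)⁻¹) h (by fun_prop) hc,
      ← cfc_one ℝ h]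
    apply cfc_congr
    intro t ht
    have := hsp t ht
    have : ε + t ≠ 0 := by positivity
    simp [this]
  · rw [hk, ← cfc_mul (fun t : ℝ => (ε + t)⁻¹) (fun t : ℝ => ε + t) h hc (by fun_prop),
      ← cfc_one ℝ h]
    apply cfc_congr
    intro t ht
    have := hsp t ht
    have : ε + t ≠ 0 := by positivity
    simp [this]
  · exact (cfc_predicate (fun t : ℝ => (ε + t)⁻¹) h : IsSelfAdjoint _)
  · apply norm_cfc_le (by positivity)
    intro t ht
    have := hsp t ht
    rw [Real.norm_of_nonneg (by positivity)]
    gcongr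
    linarith
  · rw [mul_assoc, hD, ← cfc_mul (fun t : ℝ => (ε + t)⁻¹) (fun t : ℝ => t * (ε + t)⁻¹) h hc
      (by fun_prop)]
    apply norm_cfc_le (by positivity)
    intro t ht
    have := hsp t ht
    rw [Real.norm_of_nonneg (by positivity)]
    have h1 : t * (ε + t)⁻¹ ≤ 1 := by
      rw [← div_eq_mul_inv, div_le_one (by positivity)]; linarith
    have h2 : (ε + t)⁻¹ ≤ ε⁻¹ := by gcongr; linarith
    calc (ε + t)⁻¹ * (t * (ε + t)⁻¹) ≤ ε⁻¹ * 1 := by gcongr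
      _ = ε⁻¹ := mul_one _
  · rw [hD]
    apply cfc_nonneg
    intro t ht
    have := hsp t ht
    positivity
  · rw [hD]
    apply cfc_le_one
    intro t ht
    have := hsp t ht
    rw [← div_eq_mul_inv, div_le_one (by positivity)]; linarith

lemma aux_lim (β₂ β₄ c : ℝ) (hc : 0 < c) (hβ₄ : 0 < β₄) (hβ₄₂ : β₄ < β₂) :
    Tendsto (fun N : ℕ => Real.exp ((N : ℝ) ^ β₄ - c * (N : ℝ) ^ β₂)) atTop (nhds 0) := by
  have h0 : Tendsto (fun x : ℝ => x ^ β₄ - c * x ^ β₂) atTop atBot := by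
    have h1 : Tendsto (fun x : ℝ => x ^ β₄ * (1 - c * x ^ (β₂ - β₄))) atTop atBot := by
      apply Tendsto.atTop_mul_atBot₀ (tendsto_rpow_atTop hβ₄)
      have h2 := (tendsto_rpow_atTop (sub_pos.2 hβ₄₂)).const_mul_atTop hc
      have h3 := tendsto_atBot_add_const_left atTop (1:ℝ) (tendsto_neg_atTop_atBot.comp h2)
      simpa [sub_eq_add_neg] using h3
    refine h1.congr' ?_
    filter_upwards [eventually_gt_atTop 0] with x hx
    have : x ^ β₂ = x ^ β₄ * x ^ (β₂ - β₄) := by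
      rw [← Real.rpow_add hx]; congr 1; ring
    rw [this]; ring
  exact Real.tendsto_exp_atBot.comp (h0.comp tendsto_natCast_atTop_atTop)

lemma aux_cs [NormedRing 𝒜] [StarRing 𝒜]
    [NormedAlgebra ℂ 𝒜] [StarModule ℂ 𝒜] (φ : 𝒜 →ₗ[ℂ] ℂ)
    (hφ_pos : ∀ x : 𝒜, 0 ≤ (φ (star x * x)).re ∧ (φ (star x * x)).im = 0)
    (A : 𝒜) (hA : φ (star A * A) = 0) (Y : 𝒜) : φ (Y * A) = 0 := by
  obtain ⟨X, rfl⟩ : ∃ X, Y = star X := ⟨star Y, (star_star Y).symm⟩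
  have key : ∀ t : ℂ, φ (star (X + t • A) * (X + t • A)) =
      φ (star X * X) + t * φ (star X * A) + star t * φ (star A * X) := by
    intro t
    simp only [star_add, star_smul, add_mul, mul_add, smul_mul_assoc, mul_smul_comm, map_add,
      map_smul, hA, smul_eq_mul]
    ring
  have hX := hφ_pos X
  generalize φ (star X * A) = a at *
  generalize φ (star A * X) = b at *
  generalize φ (star X * X) = c at *
  have k1 : ∀ r : ℝ, 0 ≤ c.re + r * (a.re + b.re) := by
    intro r
    have := (hφ_pos (X + (r : ℂ) • A)).1
    rw [key] at this
    simp at this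
    linarith
  have k2 : a.im + b.im = 0 := by
    have := (hφ_pos (X + (1 : ℂ) • A)).2
    rw [key] at this
    simp at this
    linarith [hX.2]
  have k3 : ∀ r : ℝ, 0 ≤ c.re + r * (b.im - a.im) := by
    intro r
    have := (hφ_pos (X + ((r : ℂ) * Complex.I) • A)).1
    rw [key] at this
    simp at this
    linarith
  have k4 : a.re - b.re = 0 := by
    have := (hφ_pos (X + (Complex.I) • A)).2
    rw [key] at this
    simp at this
    linarith [hX.2]
  have lin : ∀ p q : ℝ, (∀ r : ℝ, 0 ≤ p + r * q) → q = 0 := by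
    intro p q h
    by_contra hq
    have := h (-(p + 1) / q)
    rw [div_mul_cancel₀ _ hq] at this
    linarith
  have e1 := lin _ _ k1
  have e2 := lin _ _ k3
  apply Complex.ext
  · simp; linarith
  · simp; linarith


theorem stmt_11 [NormedRing 𝒜] [StarRing 𝒜] [CStarRing 𝒜] [CompleteSpace 𝒜]
    [NormedAlgebra ℂ 𝒜] [StarModule ℂ 𝒜] [PartialOrder 𝒜] [StarOrderedRing 𝒜]
    (E : ℕ → 𝒜 →ₗ[ℂ] 𝒜)
    (hE_norm : ∀ (N : ℕ) (x : 𝒜), ‖E N x‖ ≤ ‖x‖)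
    (hE_star : ∀ (N : ℕ) (x : 𝒜), E N (star x) = star (E N x))
    (hE_comp : ∀ (N M : ℕ) (x : 𝒜), E N (E M x) = E (min N M) x)
    (hE_mul₁ : ∀ (N : ℕ) (x y : 𝒜), E N (E N x * y) = E N x * E N y)
    (hE_mul₂ : ∀ (N : ℕ) (x y : 𝒜), E N (x * E N y) = E N x * E N y)
    (hE_unital : ∀ N : ℕ, E N 1 = 1)
    (hE_pos : ∀ (N : ℕ) (x : 𝒜), 0 ≤ x → 0 ≤ E N x)
    (φ : 𝒜 →ₗ[ℂ] ℂ) (hφ_cont : Continuous φ) (hφ_one : φ 1 = 1)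
    (hφ_pos : ∀ x : 𝒜, 0 ≤ (φ (star x * x)).re ∧ (φ (star x * x)).im = 0)
    (β₂ β₄ : ℝ) (hβ₄ : 0 < β₄) (hβ₄₂ : β₄ < β₂) (hβ₂ : β₂ < 1)
    (A : 𝒜) (hA_L : φ (star A * A) = 0)
    (hA_Df : memDf E (fun t => Real.exp (-t ^ β₂)) A) :
    ∃ u : ℕ → 𝒜,
      (∀ N : ℕ, E N (u N) = u N ∧ 0 ≤ u N ∧ u N ≤ 1) ∧
      Tendsto (fun N => fnorm E (fun t => Real.exp (-t ^ β₄)) (A * (1 - u N)))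
        atTop (nhds 0) ∧
      Tendsto (fun N => φ (u N)) atTop (nhds 0) ∧
      Tendsto (fun N => Metric.infDist (u N) {x : 𝒜 | φ (star x * x) = 0})
        atTop (nhds 0) := by
  letI : CStarAlgebra 𝒜 := {}
  obtain ⟨C₀, hC₀⟩ := hA_Df
  set C : ℝ := max C₀ 0 with hCdef
  have hC0 : 0 ≤ C := le_max_right _ _
  have hC : ∀ N : ℕ, 1 ≤ N → ‖A - E N A‖ ≤ C * Real.exp (-(N : ℝ) ^ β₂) := by
    intro N hN
    have h1 := hC₀ ⟨N, hN, rfl⟩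
    have h2 : ‖A - E N A‖ / Real.exp (-(N : ℝ) ^ β₂) ≤ C := le_trans h1 (le_max_left _ _)
    rwa [div_le_iff₀ (Real.exp_pos _)] at h2
  let ε : ℕ → ℝ := fun N => Real.exp (-(1/2) * (N : ℝ) ^ β₂)
  have hε : ∀ N, 0 < ε N := fun N => Real.exp_pos _
  let h : ℕ → 𝒜 := fun N => star (E N A) * E N A
  have hh : ∀ N, 0 ≤ h N := fun N => star_mul_self_nonneg _
  have hEE : ∀ N x, E N (E N x) = E N x := fun N x => by rw [hE_comp, min_self]
  have hEh : ∀ N, E N (h N) = h N := by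
    intro N
    simp only [h]
    rw [← hE_star, hE_mul₁, hEE]
  choose D hD1 hD2 hDs hDn hDh hu0 hu1 using fun N => aux_res (h N) (hh N) (ε N) (hε N)
  choose D' hD1' hD2' hDs' hDn' hDh' hu0' hu1' using
    fun N => aux_res (star A * A) (star_mul_self_nonneg A) (ε N) (hε N)
  have hED : ∀ N, E N (D N) = D N := by
    intro N
    have hk : E N ((ε N : ℂ) • (1 : 𝒜) + h N) = (ε N : ℂ) • (1 : 𝒜) + h N := by
      rw [map_add, map_smul, hE_unital, hEh]
    have h1 := hE_mul₁ N ((ε N : ℂ) • (1 : 𝒜) + h N) (D N)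
    rw [hk, hD1, hE_unital] at h1
    calc E N (D N) = (D N * ((ε N : ℂ) • (1 : 𝒜) + h N)) * E N (D N) := by rw [hD2, one_mul]
      _ = D N := by rw [mul_assoc, ← h1, mul_one]
  have hEu : ∀ N, E N (h N * D N) = h N * D N := by
    intro N
    have := hE_mul₁ N (h N) (D N)
    rwa [hEh, hED] at this
  have hone : ∀ N, 1 - h N * D N = (ε N : ℂ) • D N := by
    intro N
    have := hD1 N
    rw [add_mul, smul_mul_assoc, one_mul] at this
    rw [← this]; abel
  have hDn1 : ∀ N, ‖(ε N : ℂ) • D N‖ ≤ 1 := by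
    intro N
    rw [norm_smul, Complex.norm_real, Real.norm_of_nonneg (hε N).le]
    calc ε N * ‖D N‖ ≤ ε N * (ε N)⁻¹ := by gcongr; exact hDn N
      _ = 1 := mul_inv_cancel₀ (hε N).ne'
  have hDn1' : ∀ N, ‖(ε N : ℂ) • D' N‖ ≤ 1 := by
    intro N
    rw [norm_smul, Complex.norm_real, Real.norm_of_nonneg (hε N).le]
    calc ε N * ‖D' N‖ ≤ ε N * (ε N)⁻¹ := by gcongr; exact hDn' N
      _ = 1 := mul_inv_cancel₀ (hε N).ne'
  have hloc : ∀ N, ‖E N A * (1 - h N * D N)‖ ≤ Real.exp (-(1/4) * (N : ℝ) ^ β₂) := by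
    intro N
    have h1 : star (E N A * (1 - h N * D N)) * (E N A * (1 - h N * D N)) =
        ((ε N : ℂ) * (ε N : ℂ)) • (D N * h N * D N) := by
      rw [hone, star_mul, star_smul, hDs]
      simp only [h, smul_mul_assoc, mul_smul_comm, mul_assoc, smul_smul]
      simp
    have h2 : ‖E N A * (1 - h N * D N)‖ * ‖E N A * (1 - h N * D N)‖ ≤ ε N := by
      rw [← CStarRing.norm_star_mul_self, h1, norm_smul, norm_mul, Complex.norm_real,
        Real.norm_of_nonneg (hε N).le]
      calc ε N * ε N * ‖D N * h N * D N‖ ≤ ε N * ε N * (ε N)⁻¹ := by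
            gcongr
            · exact hDh N
        _ = ε N := by rw [mul_assoc, mul_inv_cancel₀ (hε N).ne', mul_one]
    have h3 : ε N = Real.exp (-(1/4) * (N : ℝ) ^ β₂) * Real.exp (-(1/4) * (N : ℝ) ^ β₂) := by
      rw [← Real.exp_add]; simp only [ε]; congr 1; ring
    rw [h3] at h2
    exact (mul_self_le_mul_self_iff (norm_nonneg _) (Real.exp_pos _).le).2 h2
  have hB : ∀ N : ℕ, 1 ≤ N →
      ‖A * (1 - h N * D N)‖ ≤ (C + 1) * Real.exp (-(1/4) * (N : ℝ) ^ β₂) := by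
    intro N hN
    have h1 : A * (1 - h N * D N) = (A - E N A) * (1 - h N * D N) + E N A * (1 - h N * D N) := by
      rw [← add_mul, sub_add_cancel]
    have h2 : ‖(A - E N A) * (1 - h N * D N)‖ ≤ C * Real.exp (-(1/4) * (N : ℝ) ^ β₂) := by
      calc _ ≤ ‖A - E N A‖ * ‖1 - h N * D N‖ := norm_mul_le _ _
        _ ≤ ‖A - E N A‖ * 1 := by
          gcongr
          rw [hone]; exact hDn1 N
        _ ≤ C * Real.exp (-(N : ℝ) ^ β₂) := by rw [mul_one]; exact hC N hN
        _ ≤ _ := by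
          gcongr
          have : 0 ≤ (N : ℝ) ^ β₂ := by positivity
          linarith
    rw [h1]
    calc _ ≤ _ := norm_add_le _ _
      _ ≤ _ := add_le_add h2 (hloc N)
      _ = _ := by ring
  have hlim1 : Tendsto (fun N => fnorm E (fun t => Real.exp (-t ^ β₄)) (A * (1 - h N * D N)))
        atTop (nhds 0) := by
    have hq := (aux_lim β₂ β₄ (1/4) (by norm_num) hβ₄ hβ₄₂).const_mul (2 * (C + 1))
    rw [mul_zero] at hq
    rw [Metric.tendsto_atTop]
    intro δ hδ
    obtain ⟨N₀, hN₀⟩ := eventually_atTop.1 (hq.eventually (gt_mem_nhds (show 0 < δ / 3 by positivity)))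
    refine ⟨max N₀ 1, fun N hN => ?_⟩
    have hN0 : N₀ ≤ N := le_trans (le_max_left _ _) hN
    have hN1 : 1 ≤ N := le_trans (le_max_right _ _) hN
    have hBN := hB N hN1
    set B := A * (1 - h N * D N) with hBdef
    have hs : sSup {r : ℝ | ∃ M : ℕ, 1 ≤ M ∧ r = ‖B - E M B‖ / Real.exp (-(M : ℝ) ^ β₄)} ≤ δ / 3 := by
      apply Real.sSup_le _ (by positivity)
      rintro r ⟨M, hM, rfl⟩
      rcases le_or_gt N M with hNM | hNM
      · refine le_trans ?_ (hN₀ M (hN0.trans hNM)).le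
        have hEM : E M (1 - h N * D N) = 1 - h N * D N := by
          rw [map_sub, hE_unital, ← hEu N, hE_comp, min_eq_right hNM]
        have h1 : B - E M B = (A - E M A) * (1 - h N * D N) := by
          have := hE_mul₂ M A (1 - h N * D N)
          rw [hEM] at this
          rw [hBdef, this, sub_mul]
        have h2 : ‖B - E M B‖ ≤ C * Real.exp (-(M : ℝ) ^ β₂) := by
          rw [h1]
          calc _ ≤ ‖A - E M A‖ * ‖1 - h N * D N‖ := norm_mul_le _ _
            _ ≤ ‖A - E M A‖ * 1 := by
              gcongr
              rw [hone]; exact hDn1 N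
            _ ≤ C * Real.exp (-(M : ℝ) ^ β₂) := by rw [mul_one]; exact hC M hM
        rw [div_le_iff₀ (Real.exp_pos _), mul_assoc, ← Real.exp_add]
        refine h2.trans ?_
        have : 0 ≤ (M : ℝ) ^ β₂ := by positivity
        gcongr
        · linarith
        · linarith
      · refine le_trans ?_ (hN₀ N hN0).le
        have h2 : ‖B - E M B‖ ≤ 2 * ((C + 1) * Real.exp (-(1/4) * (N : ℝ) ^ β₂)) := by
          calc _ ≤ ‖B‖ + ‖E M B‖ := norm_sub_le _ _
            _ ≤ _ := by linarith [hE_norm M B]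
        rw [div_le_iff₀ (Real.exp_pos _), mul_assoc, ← Real.exp_add]
        refine h2.trans ?_
        rw [← mul_assoc]
        have : (M : ℝ) ^ β₄ ≤ (N : ℝ) ^ β₄ := by gcongr
        gcongr
        linarith
    have hs0 : 0 ≤ sSup {r : ℝ | ∃ M : ℕ, 1 ≤ M ∧ r = ‖B - E M B‖ / Real.exp (-(M : ℝ) ^ β₄)} := by
      apply Real.sSup_nonneg
      rintro r ⟨M, hM, rfl⟩
      positivity
    have hBd : ‖B‖ ≤ δ / 3 := by
      refine hBN.trans (le_trans ?_ (hN₀ N hN0).le)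
      have : 0 ≤ (N : ℝ) ^ β₄ := by positivity
      gcongr
      · linarith
      · linarith
    have hf : fnorm E (fun t => Real.exp (-t ^ β₄)) B = ‖B‖ +
      sSup {r : ℝ | ∃ M : ℕ, 1 ≤ M ∧ r = ‖B - E M B‖ / Real.exp (-(M : ℝ) ^ β₄)} := rfl
    rw [hf, Real.dist_eq, sub_zero, abs_of_nonneg (by positivity)]
    linarith
  have hclose : ∀ N : ℕ, 1 ≤ N →
      ‖h N * D N - D' N * (star A * A)‖ ≤ (2 * ‖A‖ * C) * Real.exp ((N : ℝ) ^ (β₄) - (1/2) * (N : ℝ) ^ β₂) := by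
    intro N hN
    have h0 : D' N * (star A * A) = 1 - (ε N : ℂ) • D' N := by
      have := hD2' N
      rw [mul_add, mul_smul_comm, mul_one] at this
      rw [← this]; abel
    have h0' : h N * D N = 1 - (ε N : ℂ) • D N := by rw [← hone]; abel
    have h1 : h N * D N - D' N * (star A * A) = (ε N : ℂ) • D' N * (h N - star A * A) * D N := by
      have e : D' N - D N = D' N * (h N - star A * A) * D N := by
        have e1 : h N - star A * A = ((ε N : ℂ) • (1 : 𝒜) + h N) -
          ((ε N : ℂ) • (1 : 𝒜) + star A * A) := by abel
        rw [e1, mul_sub, sub_mul, hD2', one_mul, mul_assoc, hD1, mul_one]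
      rw [h0, h0', smul_mul_assoc, smul_mul_assoc, ← e, smul_sub]; abel
    have h2 : ‖h N - star A * A‖ ≤ 2 * ‖A‖ * (C * Real.exp (-(N : ℝ) ^ β₂)) := by
      have e : h N - star A * A = -(star (A - E N A) * E N A + star A * (A - E N A)) := by
        simp only [h, star_sub]; noncomm_ring
      rw [e, norm_neg]
      calc _ ≤ _ := norm_add_le _ _
        _ ≤ ‖star (A - E N A)‖ * ‖E N A‖ + ‖star A‖ * ‖A - E N A‖ :=
          add_le_add (norm_mul_le _ _) (norm_mul_le _ _)
        _ ≤ ‖A - E N A‖ * ‖A‖ + ‖A‖ * ‖A - E N A‖ := by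
          rw [norm_star, norm_star]
          gcongr
          exact hE_norm N A
        _ = 2 * ‖A‖ * ‖A - E N A‖ := by ring
        _ ≤ _ := by gcongr; exact hC N hN
    rw [h1]
    calc _ ≤ ‖(ε N : ℂ) • D' N * (h N - star A * A)‖ * ‖D N‖ := norm_mul_le _ _
      _ ≤ (‖(ε N : ℂ) • D' N‖ * ‖h N - star A * A‖) * ‖D N‖ := by gcongr; exact norm_mul_le _ _
      _ ≤ (1 * (2 * ‖A‖ * (C * Real.exp (-(N : ℝ) ^ β₂)))) * (ε N)⁻¹ := by
        gcongr
        · exact hDn1' N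
        · exact hDn N
      _ = (2 * ‖A‖ * C) * Real.exp (-(1/2) * (N : ℝ) ^ β₂) := by
        simp only [ε]
        rw [← Real.exp_neg, one_mul, ← mul_assoc, mul_assoc, ← Real.exp_add]
        congr 2
        ring
      _ ≤ _ := by
        have : 0 ≤ (N : ℝ) ^ β₄ := by positivity
        gcongr
        linarith
  have hcl0 : Tendsto (fun N => h N * D N - D' N * (star A * A)) atTop (nhds 0) := by
    have hq := (aux_lim β₂ β₄ (1/2) (by norm_num) hβ₄ hβ₄₂).const_mul (2 * ‖A‖ * C)
    rw [mul_zero] at hq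
    apply squeeze_zero_norm' _ hq
    filter_upwards [eventually_ge_atTop 1] with N hN using hclose N hN
  have hcs := aux_cs φ hφ_pos A hA_L
  refine ⟨fun N => h N * D N, fun N => ⟨hEu N, hu0 N, hu1 N⟩, hlim1, ?_, ?_⟩
  · have h1 := (hφ_cont.tendsto 0).comp hcl0
    rw [map_zero] at h1
    refine h1.congr fun N => ?_
    have : φ (D' N * (star A * A)) = 0 := by rw [← mul_assoc]; exact hcs _
    simp [this]
  · refine squeeze_zero (fun _ => Metric.infDist_nonneg) (fun N => ?_) (tendsto_zero_iff_norm_tendsto_zero.1 hcl0)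
    rw [← dist_eq_norm]
    apply Metric.infDist_le_dist_of_mem
    show φ (_ * _) = 0
    rw [← mul_assoc, ← mul_assoc]
    exact hcs _
end

section
/- Let (τ^t)_{t∈ℝ} be a family of linear maps 𝒜 → 𝒜 with ‖τ^t(x)‖ ≤ ‖x‖ for all x, t, and suppose there are constants C₁ ≥ 0, v > 0, ν ∈ ℕ such that for all t ∈ ℝ, all integers M ≤ N, and all B ∈ 𝒜 with E_M(B) = B: ‖τ^t(B) − E_N(τ^t(B))‖ ≤ C₁·(2M+1)^ν·e^{v|t| − (N−M)}·‖B‖. Let f, f₁ : (0,∞) → (0,∞) be continuous decreasing with limit 0 at infinity, and set K₁ := sup_{N∈ℕ} f(N−⌊N/2⌋)/f₁(N) and K₂ := sup_{N∈ℕ} (2N+1)^ν·e^{−⌊N/2⌋/2 + 1/2}/f₁(N); assume K₁ < ∞ and K₂ < ∞. Then for every t ∈ ℝ and every A ∈ D_f, τ^t(A) ∈ D_{f₁} and ‖τ^t(A)‖_{f₁} ≤ ( 1 + max{ 2K₁ + C₁K₂ , (2/f₁(4v|t|))·𝟙[4v|t| ≥ 1] } ) · ‖A‖_f. -/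
open Filter

variable {𝒜 : Type*}

theorem stmt_14 [NormedRing 𝒜] [StarRing 𝒜] [CStarRing 𝒜] [CompleteSpace 𝒜]
    [NormedAlgebra ℂ 𝒜] [StarModule ℂ 𝒜]
    (E : ℕ → 𝒜 →ₗ[ℂ] 𝒜)
    (hE_norm : ∀ (N : ℕ) (x : 𝒜), ‖E N x‖ ≤ ‖x‖)
    (hE_star : ∀ (N : ℕ) (x : 𝒜), E N (star x) = star (E N x))
    (hE_comp : ∀ (N M : ℕ) (x : 𝒜), E N (E M x) = E (min N M) x)
    (hE_mul₁ : ∀ (N : ℕ) (x y : 𝒜), E N (E N x * y) = E N x * E N y)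
    (hE_mul₂ : ∀ (N : ℕ) (x y : 𝒜), E N (x * E N y) = E N x * E N y)
    (τ : ℝ → 𝒜 →ₗ[ℂ] 𝒜) (hτ_contr : ∀ (t : ℝ) (x : 𝒜), ‖τ t x‖ ≤ ‖x‖)
    (C₁ : ℝ) (hC₁ : 0 ≤ C₁) (v : ℝ) (hv : 0 < v) (ν : ℕ)
    (hτ_loc : ∀ (t : ℝ) (M N : ℕ), M ≤ N → ∀ B : 𝒜, E M B = B →
      ‖τ t B - E N (τ t B)‖ ≤
        C₁ * (2 * (M : ℝ) + 1) ^ ν * Real.exp (v * |t| - ((N : ℝ) - (M : ℝ))) * ‖B‖)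
    (f f₁ : ℝ → ℝ)
    (hf_cont : ContinuousOn f (Set.Ioi 0))
    (hf_anti : AntitoneOn f (Set.Ioi 0)) (hf_pos : ∀ t : ℝ, 0 < t → 0 < f t)
    (hf_lim : Tendsto f atTop (nhds 0))
    (hf₁_cont : ContinuousOn f₁ (Set.Ioi 0))
    (hf₁_anti : AntitoneOn f₁ (Set.Ioi 0)) (hf₁_pos : ∀ t : ℝ, 0 < t → 0 < f₁ t)
    (hf₁_lim : Tendsto f₁ atTop (nhds 0))
    (hK₁ : BddAbove {r : ℝ | ∃ N : ℕ, 1 ≤ N ∧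
      r = f ((N : ℝ) - ((N / 2 : ℕ) : ℝ)) / f₁ N})
    (hK₂ : BddAbove {r : ℝ | ∃ N : ℕ, 1 ≤ N ∧
      r = (2 * (N : ℝ) + 1) ^ ν * Real.exp (-((N / 2 : ℕ) : ℝ) / 2 + 1 / 2) / f₁ N}) :
    ∀ (t : ℝ) (A : 𝒜), memDf E f A → memDf E f₁ (τ t A) ∧
      fnorm E f₁ (τ t A) ≤
        (1 + max
          (2 * sSup {r : ℝ | ∃ N : ℕ, 1 ≤ N ∧
              r = f ((N : ℝ) - ((N / 2 : ℕ) : ℝ)) / f₁ N} +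
            C₁ * sSup {r : ℝ | ∃ N : ℕ, 1 ≤ N ∧
              r = (2 * (N : ℝ) + 1) ^ ν * Real.exp (-((N / 2 : ℕ) : ℝ) / 2 + 1 / 2) / f₁ N})
          ((2 / f₁ (4 * v * |t|)) * (if 1 ≤ 4 * v * |t| then (1 : ℝ) else 0))) *
          fnorm E f A := by
  intro t A hA
  set K₁ := sSup {r : ℝ | ∃ N : ℕ, 1 ≤ N ∧
      r = f ((N : ℝ) - ((N / 2 : ℕ) : ℝ)) / f₁ N} with hK₁def
  set K₂ := sSup {r : ℝ | ∃ N : ℕ, 1 ≤ N ∧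
      r = (2 * (N : ℝ) + 1) ^ ν * Real.exp (-((N / 2 : ℕ) : ℝ) / 2 + 1 / 2) / f₁ N} with hK₂def
  set s := sSup {r : ℝ | ∃ N : ℕ, 1 ≤ N ∧ r = ‖A - E N A‖ / f N} with hs
  set m := max (2 * K₁ + C₁ * K₂)
    ((2 / f₁ (4 * v * |t|)) * (if 1 ≤ 4 * v * |t| then (1 : ℝ) else 0)) with hm
  have hfn : fnorm E f A = ‖A‖ + s := rfl
  have cast_pos : ∀ N : ℕ, 1 ≤ N → (0 : ℝ) < N := fun N hN => by exact_mod_cast hN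
  have hs_le : ∀ N : ℕ, 1 ≤ N → ‖A - E N A‖ ≤ s * f N := by
    intro N hN
    have h := le_csSup hA (show ‖A - E N A‖ / f N ∈ _ from ⟨N, hN, rfl⟩)
    rwa [div_le_iff₀ (hf_pos _ (cast_pos N hN))] at h
  have hK₁_le : ∀ N : ℕ, 1 ≤ N → f ((N : ℝ) - ((N / 2 : ℕ) : ℝ)) ≤ K₁ * f₁ N := by
    intro N hN
    have h := le_csSup hK₁ (show f ((N : ℝ) - ((N / 2 : ℕ) : ℝ)) / f₁ N ∈ _ from ⟨N, hN, rfl⟩)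
    rwa [div_le_iff₀ (hf₁_pos _ (cast_pos N hN))] at h
  have hK₂_le : ∀ N : ℕ, 1 ≤ N →
      (2 * (N : ℝ) + 1) ^ ν * Real.exp (-((N / 2 : ℕ) : ℝ) / 2 + 1 / 2) ≤ K₂ * f₁ N := by
    intro N hN
    have h := le_csSup hK₂
      (show (2 * (N : ℝ) + 1) ^ ν * Real.exp (-((N / 2 : ℕ) : ℝ) / 2 + 1 / 2) / f₁ N ∈ _
        from ⟨N, hN, rfl⟩)
    rwa [div_le_iff₀ (hf₁_pos _ (cast_pos N hN))] at h
  have p1 : 0 < f₁ ((1 : ℕ) : ℝ) := hf₁_pos _ (by norm_num)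
  have hs0 : 0 ≤ s := by
    have h := hs_le 1 le_rfl
    have h2 : 0 < f ((1 : ℕ) : ℝ) := hf_pos _ (by norm_num)
    exact nonneg_of_mul_nonneg_left ((norm_nonneg _).trans h) h2
  have hK₁0 : 0 ≤ K₁ := by
    have h := hK₁_le 1 le_rfl
    have h2 : 0 < f (((1 : ℕ) : ℝ) - ((1 / 2 : ℕ) : ℝ)) := hf_pos _ (by norm_num)
    exact nonneg_of_mul_nonneg_left (h2.le.trans h) p1
  have hK₂0 : 0 ≤ K₂ := by
    have h := hK₂_le 1 le_rfl
    exact nonneg_of_mul_nonneg_left (le_trans (by positivity) h) p1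
  have hm0 : 0 ≤ m := le_trans (by positivity) (le_max_left _ _)
  have hA0 := norm_nonneg A
  have h2c : ∀ (N : ℕ) (x : 𝒜), ‖τ t x - E N (τ t x)‖ ≤ 2 * ‖x‖ := by
    intro N x
    have h1 := norm_sub_le (τ t x) (E N (τ t x))
    have h2 := hE_norm N (τ t x)
    have h3 := hτ_contr t x
    linarith
  have key : ∀ N : ℕ, 1 ≤ N → ‖τ t A - E N (τ t A)‖ / f₁ N ≤ m * (‖A‖ + s) := by
    intro N hN
    have hN0 := cast_pos N hN
    have hp := hf₁_pos _ hN0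
    have hN1 : (1 : ℝ) ≤ N := by exact_mod_cast hN
    by_cases hc : (N : ℝ) ≤ 4 * v * |t|
    · have hpos : 0 < 4 * v * |t| := hN0.trans_le hc
      have hle : f₁ (4 * v * |t|) ≤ f₁ N := hf₁_anti hN0 hpos hc
      have hq := hf₁_pos _ hpos
      have hm2 : 2 / f₁ (4 * v * |t|) ≤ m := by
        rw [hm, if_pos (hN1.trans hc), mul_one]
        exact le_max_right _ _
      calc ‖τ t A - E N (τ t A)‖ / f₁ N ≤ (2 * ‖A‖) / f₁ (4 * v * |t|) :=
            div_le_div₀ (by positivity) (h2c N A) hq hle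
        _ = (2 / f₁ (4 * v * |t|)) * ‖A‖ := by ring
        _ ≤ m * (‖A‖ + s) := mul_le_mul hm2 (by linarith) hA0 hm0
    · push Not at hc
      have hMeq : ((N - N / 2 : ℕ) : ℝ) = (N : ℝ) - ((N / 2 : ℕ) : ℝ) :=
        Nat.cast_sub (Nat.div_le_self N 2)
      have hM1 : 1 ≤ N - N / 2 := by omega
      have hMN : N - N / 2 ≤ N := Nat.sub_le _ _
      generalize hMd : N - N / 2 = M at *
      have e1 := hs_le M hM1
      have e2 := hK₁_le N hN
      have e3 := hK₂_le N hN
      rw [← hMeq] at e2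
      have hB : E M (E M A) = E M A := by rw [hE_comp, min_self]
      have e4 := hτ_loc t M N hMN (E M A) hB
      have e5 := h2c N (A - E M A)
      have hh : (N : ℝ) ≤ 2 * ((N / 2 : ℕ) : ℝ) + 1 := by
        have : N ≤ 2 * (N / 2) + 1 := by omega
        exact_mod_cast this
      have hMNr : (M : ℝ) ≤ N := by exact_mod_cast hMN
      have hexp : Real.exp (v * |t| - ((N : ℝ) - (M : ℝ))) ≤
          Real.exp (-((N / 2 : ℕ) : ℝ) / 2 + 1 / 2) := by
        apply Real.exp_le_exp.mpr
        rw [hMeq]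
        linarith
      have hpow : (2 * (M : ℝ) + 1) ^ ν ≤ (2 * (N : ℝ) + 1) ^ ν := by gcongr
      have hprod : (2 * (M : ℝ) + 1) ^ ν * Real.exp (v * |t| - ((N : ℝ) - (M : ℝ))) ≤
          K₂ * f₁ N :=
        (mul_le_mul hpow hexp (Real.exp_pos _).le (by positivity)).trans e3
      have e6 : ‖τ t (E M A) - E N (τ t (E M A))‖ ≤ C₁ * (K₂ * f₁ N) * ‖A‖ := by
        refine e4.trans ?_
        rw [mul_assoc C₁]
        exact mul_le_mul (mul_le_mul_of_nonneg_left hprod hC₁) (hE_norm M A) (norm_nonneg _)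
          (by positivity)
      have e7 : ‖A - E M A‖ ≤ s * (K₁ * f₁ N) := e1.trans (mul_le_mul_of_nonneg_left e2 hs0)
      have e8 : τ t A - E N (τ t A) = (τ t (A - E M A) - E N (τ t (A - E M A))) +
          (τ t (E M A) - E N (τ t (E M A))) := by
        simp only [map_sub]; abel
      have e9 : ‖τ t A - E N (τ t A)‖ ≤ 2 * (s * (K₁ * f₁ N)) + C₁ * (K₂ * f₁ N) * ‖A‖ := by
        rw [e8]
        refine (norm_add_le _ _).trans ?_
        linarith
      rw [div_le_iff₀ hp]
      refine e9.trans ?_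
      calc 2 * (s * (K₁ * f₁ N)) + C₁ * (K₂ * f₁ N) * ‖A‖
          = (2 * K₁ * s + C₁ * K₂ * ‖A‖) * f₁ N := by ring
        _ ≤ ((2 * K₁ + C₁ * K₂) * (‖A‖ + s)) * f₁ N := by
            apply mul_le_mul_of_nonneg_right _ hp.le
            have a1 : 0 ≤ K₁ * ‖A‖ := by positivity
            have a2 : 0 ≤ C₁ * K₂ * s := by positivity
            nlinarith
        _ ≤ (m * (‖A‖ + s)) * f₁ N := by
            have := le_max_left (2 * K₁ + C₁ * K₂)
              ((2 / f₁ (4 * v * |t|)) * (if 1 ≤ 4 * v * |t| then (1 : ℝ) else 0))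
            gcongr
  refine ⟨⟨m * (‖A‖ + s), ?_⟩, ?_⟩
  · rintro r ⟨N, hN, rfl⟩
    exact key N hN
  · rw [hfn]
    have h1 : sSup {r : ℝ | ∃ N : ℕ, 1 ≤ N ∧ r = ‖τ t A - E N (τ t A)‖ / f₁ N}
        ≤ m * (‖A‖ + s) := by
      refine csSup_le ⟨_, ⟨1, le_rfl, rfl⟩⟩ ?_
      rintro r ⟨N, hN, rfl⟩
      exact key N hN
    have h2 := hτ_contr t A
    unfold fnorm
    linarith
end

section
/- Let (τ^t)_{t∈ℝ} be a family of linear maps 𝒜 → 𝒜 with ‖τ^t(x)‖ ≤ ‖x‖ for all x, t, such that for each A ∈ 𝒜 the map t ↦ τ^t(A) is norm-continuous, and suppose there are constants C₁ ≥ 0, v > 0, ν ∈ ℕ such that for all t ∈ ℝ, all integers M ≤ N, and all B ∈ 𝒜 with E_M(B) = B: ‖τ^t(B) − E_N(τ^t(B))‖ ≤ C₁·(2M+1)^ν·e^{v|t| − (N−M)}·‖B‖. Let ω : ℝ → [0,∞) be an even Lebesgue-integrable function with ∫_ℝ ω(t) dt = 1, and set W(x) := ∫_x^∞ ω(t) dt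 for x ≥ 0. Let f, f₁ : (0,∞) → (0,∞) be continuous decreasing with limit 0 at infinity such that sup_{N∈ℕ} f(N−⌊N/2⌋)/f₁(N) < ∞, sup_{N∈ℕ} (2N+1)^ν·e^{−⌊N/2⌋/2}/f₁(N) < ∞, and sup_{N∈ℕ} W(⌊N/2⌋/(2v))/f₁(N) < ∞. Then for every A ∈ D_f the Bochner integral I(A) := ∫_ℝ ω(t)·τ^t(A) dt exists in 𝒜, and I(A) ∈ D_{f₁}. -/
open Filter

variable {𝒜 : Type*}

open MeasureTheory

theorem stmt_15 [NormedRing 𝒜] [StarRing 𝒜] [CStarRing 𝒜] [CompleteSpace 𝒜]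
    [NormedAlgebra ℂ 𝒜] [StarModule ℂ 𝒜]
    (E : ℕ → 𝒜 →ₗ[ℂ] 𝒜)
    (hE_norm : ∀ (N : ℕ) (x : 𝒜), ‖E N x‖ ≤ ‖x‖)
    (hE_star : ∀ (N : ℕ) (x : 𝒜), E N (star x) = star (E N x))
    (hE_comp : ∀ (N M : ℕ) (x : 𝒜), E N (E M x) = E (min N M) x)
    (hE_mul₁ : ∀ (N : ℕ) (x y : 𝒜), E N (E N x * y) = E N x * E N y)
    (hE_mul₂ : ∀ (N : ℕ) (x y : 𝒜), E N (x * E N y) = E N x * E N y)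
    (τ : ℝ → 𝒜 →ₗ[ℂ] 𝒜) (hτ_contr : ∀ (t : ℝ) (x : 𝒜), ‖τ t x‖ ≤ ‖x‖)
    (hτ_cont : ∀ A : 𝒜, Continuous fun t : ℝ => τ t A)
    (C₁ : ℝ) (hC₁ : 0 ≤ C₁) (v : ℝ) (hv : 0 < v) (ν : ℕ)
    (hτ_loc : ∀ (t : ℝ) (M N : ℕ), M ≤ N → ∀ B : 𝒜, E M B = B →
      ‖τ t B - E N (τ t B)‖ ≤
        C₁ * (2 * (M : ℝ) + 1) ^ ν * Real.exp (v * |t| - ((N : ℝ) - (M : ℝ))) * ‖B‖)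
    (ω : ℝ → ℝ) (hω_nonneg : ∀ t, 0 ≤ ω t) (hω_even : ∀ t, ω (-t) = ω t)
    (hω_int : Integrable ω) (hω_one : ∫ t : ℝ, ω t = 1)
    (f f₁ : ℝ → ℝ)
    (hf_cont : ContinuousOn f (Set.Ioi 0))
    (hf_anti : AntitoneOn f (Set.Ioi 0)) (hf_pos : ∀ t : ℝ, 0 < t → 0 < f t)
    (hf_lim : Tendsto f atTop (nhds 0))
    (hf₁_cont : ContinuousOn f₁ (Set.Ioi 0))
    (hf₁_anti : AntitoneOn f₁ (Set.Ioi 0)) (hf₁_pos : ∀ t : ℝ, 0 < t → 0 < f₁ t)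
    (hf₁_lim : Tendsto f₁ atTop (nhds 0))
    (hK₁ : BddAbove {r : ℝ | ∃ N : ℕ, 1 ≤ N ∧
      r = f ((N : ℝ) - ((N / 2 : ℕ) : ℝ)) / f₁ N})
    (hK₂ : BddAbove {r : ℝ | ∃ N : ℕ, 1 ≤ N ∧
      r = (2 * (N : ℝ) + 1) ^ ν * Real.exp (-((N / 2 : ℕ) : ℝ) / 2) / f₁ N})
    (hK₃ : BddAbove {r : ℝ | ∃ N : ℕ, 1 ≤ N ∧
      r = (∫ t in Set.Ioi (((N / 2 : ℕ) : ℝ) / (2 * v)), ω t) / f₁ N}) :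
    ∀ A : 𝒜, memDf E f A →
      Integrable (fun t : ℝ => ω t • τ t A) ∧
      memDf E f₁ (∫ t : ℝ, ω t • τ t A) := by
  intro A hA
  obtain ⟨K, hK⟩ := hA
  obtain ⟨K₁, hK₁⟩ := hK₁
  obtain ⟨K₂, hK₂⟩ := hK₂
  obtain ⟨K₃, hK₃⟩ := hK₃
  have hInt : ∀ X : 𝒜, Integrable (fun t : ℝ => ω t • τ t X) := by
    intro X
    refine Integrable.mono' (hω_int.mul_const ‖X‖)
      (hω_int.aestronglyMeasurable.smul (hτ_cont X).aestronglyMeasurable) ?_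
    refine Eventually.of_forall fun t => ?_
    rw [norm_smul, Real.norm_of_nonneg (hω_nonneg t)]
    exact mul_le_mul_of_nonneg_left (hτ_contr t X) (hω_nonneg t)
  refine ⟨hInt A, ?_⟩
  refine ⟨2 * |K| * K₁ + C₁ * ‖A‖ * K₂ + 4 * ‖A‖ * K₃, ?_⟩
  rintro r ⟨N, hN, rfl⟩
  have hNpos : (0 : ℝ) < N := by exact_mod_cast hN
  have hf1 : 0 < f₁ N := hf₁_pos _ hNpos
  have h1 := hK₁ ⟨N, hN, rfl⟩
  have h2 := hK₂ ⟨N, hN, rfl⟩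
  have h3 := hK₃ ⟨N, hN, rfl⟩
  rw [div_le_iff₀ hf1] at h1 h2 h3 ⊢
  obtain ⟨m, hm⟩ : ∃ m : ℕ, m = N / 2 := ⟨_, rfl⟩
  obtain ⟨M, hM⟩ : ∃ M : ℕ, M = N - m := ⟨_, rfl⟩
  have hM1 : 1 ≤ M := by omega
  have hMN : M ≤ N := by omega
  have hcast : (N : ℝ) - (m : ℝ) = M := by
    rw [hM, Nat.cast_sub (by omega)]
  rw [← hm] at h1 h2 h3
  rw [hcast] at h1
  have hMpos : (0 : ℝ) < M := by exact_mod_cast hM1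
  have hfM : 0 < f M := hf_pos _ hMpos
  have hAB : ‖A - E M A‖ ≤ |K| * f M := by
    have := hK ⟨M, hM1, rfl⟩
    rw [div_le_iff₀ hfM] at this
    exact this.trans (mul_le_mul_of_nonneg_right (le_abs_self K) hfM.le)
  have hEB : E M (E M A) = E M A := by rw [hE_comp, min_self]
  have hsub : ∀ X : 𝒜, ‖X - E N X‖ ≤ 2 * ‖X‖ := fun X => by
    have := norm_sub_le X (E N X)
    linarith [hE_norm N X]
  set a : ℝ := (m : ℝ) / (2 * v) with ha
  have ha0 : 0 ≤ a := by positivity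
  set P : ℝ := (2 * (N : ℝ) + 1) ^ ν * Real.exp (-(m : ℝ) / 2) with hP
  have hP0 : 0 ≤ P := by positivity
  -- pointwise decomposition
  have hdec : ∀ t, ‖τ t A - E N (τ t A)‖ ≤
      2 * (|K| * f M) + ‖τ t (E M A) - E N (τ t (E M A))‖ := by
    intro t
    have e : τ t A - E N (τ t A) = (τ t (A - E M A) - E N (τ t (A - E M A))) +
        (τ t (E M A) - E N (τ t (E M A))) := by
      simp only [map_sub]; abel
    rw [e]
    refine (norm_add_le _ _).trans ?_
    have := hsub (τ t (A - E M A))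
    have := hτ_contr t (A - E M A)
    linarith
  have hin : ∀ t, |t| ≤ a → ‖τ t (E M A) - E N (τ t (E M A))‖ ≤ C₁ * ‖A‖ * P := by
    intro t ht
    have hvt : v * |t| ≤ m / 2 := by
      calc v * |t| ≤ v * a := mul_le_mul_of_nonneg_left ht hv.le
        _ = m / 2 := by rw [ha]; field_simp
    have hNM : (N : ℝ) - M = m := by linarith
    refine (hτ_loc t M N hMN _ hEB).trans ?_
    rw [hNM]
    have hMN' : (M : ℝ) ≤ N := by exact_mod_cast hMN
    calc C₁ * (2 * (M : ℝ) + 1) ^ ν * Real.exp (v * |t| - m) * ‖E M A‖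
        ≤ C₁ * (2 * (N : ℝ) + 1) ^ ν * Real.exp (-(m : ℝ) / 2) * ‖A‖ := by
          gcongr
          · linarith
          · exact hE_norm M A
      _ = C₁ * ‖A‖ * P := by rw [hP]; ring
  have hout : ∀ t, ‖τ t (E M A) - E N (τ t (E M A))‖ ≤ 2 * ‖A‖ := by
    intro t
    have := hsub (τ t (E M A))
    have := hτ_contr t (E M A)
    have := hE_norm M A
    linarith
  set g : ℝ → ℝ := fun t => ω t * (2 * (|K| * f M) + C₁ * ‖A‖ * P) +
    2 * ‖A‖ * ((Set.Ioi a).indicator ω t + (Set.Iio (-a)).indicator ω t) with hg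
  have hi1 : Integrable ((Set.Ioi a).indicator ω) := hω_int.indicator measurableSet_Ioi
  have hi2 : Integrable ((Set.Iio (-a)).indicator ω) := hω_int.indicator measurableSet_Iio
  have hgi : Integrable g := (hω_int.mul_const _).add ((hi1.add hi2).const_mul _)
  have hbound : ∀ t, ‖ω t • (τ t A - E N (τ t A))‖ ≤ g t := by
    intro t
    rw [norm_smul, Real.norm_of_nonneg (hω_nonneg t)]
    have hw := hω_nonneg t
    have n1 : 0 ≤ (Set.Ioi a).indicator ω t := Set.indicator_nonneg (fun x _ => hω_nonneg x) t
    have n2 : 0 ≤ (Set.Iio (-a)).indicator ω t := Set.indicator_nonneg (fun x _ => hω_nonneg x) t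
    have hCP : 0 ≤ C₁ * ‖A‖ * P := by positivity
    by_cases ht : |t| ≤ a
    · have : ω t * ‖τ t A - E N (τ t A)‖ ≤ ω t * (2 * (|K| * f M) + C₁ * ‖A‖ * P) :=
        mul_le_mul_of_nonneg_left (by linarith [hdec t, hin t ht]) hw
      have : 0 ≤ 2 * ‖A‖ * ((Set.Ioi a).indicator ω t + (Set.Iio (-a)).indicator ω t) := by
        positivity
      simp only [hg]; linarith
    · have h5 : ω t * ‖τ t A - E N (τ t A)‖ ≤ ω t * (2 * (|K| * f M) + C₁ * ‖A‖ * P + 2 * ‖A‖) :=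
        mul_le_mul_of_nonneg_left (by linarith [hdec t, hout t]) hw
      have h6 : ω t ≤ (Set.Ioi a).indicator ω t + (Set.Iio (-a)).indicator ω t := by
        rcases lt_abs.1 (not_le.1 ht) with h | h
        · rw [Set.indicator_of_mem (show t ∈ Set.Ioi a from h)]; linarith
        · rw [Set.indicator_of_mem (show t ∈ Set.Iio (-a) from by
            simp only [Set.mem_Iio]; linarith)]; linarith
      have h7 := mul_le_mul_of_nonneg_left h6 (show 0 ≤ 2 * ‖A‖ by positivity)
      simp only [hg]; linarith
  let L : 𝒜 →L[ℂ] 𝒜 := (E N).mkContinuous 1 (fun x => by simpa using hE_norm N x)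
  have hL : ∀ x, L x = E N x := fun x => rfl
  have hcomm : (∫ t : ℝ, ω t • τ t A) - E N (∫ t : ℝ, ω t • τ t A) =
      ∫ t : ℝ, ω t • (τ t A - E N (τ t A)) := by
    rw [← hL, ← L.integral_comp_comm (hInt A), ← integral_sub (hInt A) (L.integrable_comp (hInt A))]
    refine integral_congr_ae (Eventually.of_forall fun t => ?_)
    simp only [hL]
    rw [LinearMap.map_smul_of_tower, smul_sub]
  have hrefl : ∫ t in Set.Iio (-a), ω t = ∫ t in Set.Ioi a, ω t := by
    rw [← integral_Iic_eq_integral_Iio, ← integral_comp_neg_Ioi]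
    simp only [hω_even]
  have hgint : ∫ t, g t = 2 * (|K| * f M) + C₁ * ‖A‖ * P +
      4 * ‖A‖ * ∫ t in Set.Ioi a, ω t := by
    simp only [hg]
    have hi3 : Integrable (fun t => 2 * ‖A‖ *
        ((Set.Ioi a).indicator ω t + (Set.Iio (-a)).indicator ω t)) :=
      (hi1.add hi2).const_mul _
    rw [integral_add (hω_int.mul_const _) hi3, integral_mul_const,
      integral_const_mul, integral_add hi1 hi2, integral_indicator measurableSet_Ioi,
      integral_indicator measurableSet_Iio, hrefl, hω_one]
    ring
  rw [hcomm]
  refine (norm_integral_le_of_norm_le hgi (Eventually.of_forall hbound)).trans ?_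
  rw [hgint]
  have q1 := mul_le_mul_of_nonneg_left h1 (show 0 ≤ 2 * |K| by positivity)
  have q2 := mul_le_mul_of_nonneg_left h2 (show 0 ≤ C₁ * ‖A‖ by positivity)
  have q3 := mul_le_mul_of_nonneg_left h3 (show 0 ≤ 4 * ‖A‖ by positivity)
  linarith
end
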